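/- A canonical admissible 6-tuple f=(h₀,h₁,h₂;q₀,q₁,q₂) is minimal if and only if q₂<h₀, or q₂>h₁+h₂−h₀, or (h₀=h₁ and h₀<q₂<h₂). -/

import Mathlib

/-!
Common setup: 6-tuples, the coloured graph Γ(f), conditions (I)–(VI),
the maps ψ₁, ψ₂, ψ₃, σ, equivalences, traps, canonical/minimal/root tuples.
-/

namespace GMN

/-- A 6-tuple `(h₀,h₁,h₂;q₀,q₁,q₂)` of integers. -/
structure Tuple where
  h0 : ℤ
  h1 : ℤ
  h2 : ℤ
  q0 : ℤ
  q1 : ℤ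
  q2 : ℤ

namespace Tuple

/-- The `h`-components indexed by `ℤ₃`. -/
def h (f : Tuple) : ZMod 3 → ℤ := fun i => if i = 0 then f.h0 else if i = 1 then f.h1 else f.h2

/-- The `q`-components indexed by `ℤ₃`. -/
def q (f : Tuple) : ZMod 3 → ℤ := fun i => if i = 0 then f.q0 else if i = 1 then f.q1 else f.q2

/-- `2lᵢ = h_{i-1} + hᵢ`. -/
def twol (f : Tuple) (i : ZMod 3) : ℤ := f.h (i - 1) + f.h i

end Tuple

/-- Condition (I): all `hᵢ` positive. -/
def CondI (f : Tuple) : Prop := ∀ i, 0 < f.h i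

/-- Condition (II): all `hᵢ` of the same parity. -/
def CondII (f : Tuple) : Prop := ∀ i j, f.h i % 2 = f.h j % 2

/-- Condition (III): `0 ≤ qᵢ < 2lᵢ`. -/
def CondIII (f : Tuple) : Prop := ∀ i, 0 ≤ f.q i ∧ f.q i < f.twol i

/-- Condition (IV): all `qᵢ` of the same parity. -/
def CondIV (f : Tuple) : Prop := ∀ i j, f.q i % 2 = f.q j % 2

/-- Conditions (I)–(IV) together. -/
def CondsI_IV (f : Tuple) : Prop := CondI f ∧ CondII f ∧ CondIII f ∧ CondIV f

/-- Condition (V): `hᵢ + qᵢ` odd. -/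
def CondV (f : Tuple) : Prop := ∀ i, (f.h i + f.q i) % 2 = 1

/-- The vertex set `V(f) = ⋃ᵢ {i} × ℤ_{2lᵢ}`, with second coordinates as least
nonnegative residues. -/
def Vtx (f : Tuple) : Set (ZMod 3 × ℤ) := {p | 0 ≤ p.2 ∧ p.2 < f.twol p.1}

/-- `ι₀(i,j) = (i, j + (−1)^j)`, second coordinate mod `2lᵢ`. -/
def iota0 (f : Tuple) (p : ZMod 3 × ℤ) : ZMod 3 × ℤ :=
  (p.1, (if p.2 % 2 = 0 then p.2 + 1 else p.2 - 1) % f.twol p.1)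

/-- `ι₁(i,j) = (i, j − (−1)^j)`, second coordinate mod `2lᵢ`. -/
def iota1 (f : Tuple) (p : ZMod 3 × ℤ) : ZMod 3 × ℤ :=
  (p.1, (if p.2 % 2 = 0 then p.2 - 1 else p.2 + 1) % f.twol p.1)

/-- `ι₂(i,j) = (i+1, −j−1)` if `0 ≤ j ≤ hᵢ−1`, and `(i−1, 2lᵢ−j−1)` if `hᵢ ≤ j ≤ 2lᵢ−1`. -/
def iota2 (f : Tuple) (p : ZMod 3 × ℤ) : ZMod 3 × ℤ :=
  if p.2 < f.h p.1 then (p.1 + 1, (-p.2 - 1) % f.twol (p.1 + 1))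
  else (p.1 - 1, (f.twol p.1 - p.2 - 1) % f.twol (p.1 - 1))

/-- `ρ(i,j) = (i, j + qᵢ)`. -/
def rho (f : Tuple) (p : ZMod 3 × ℤ) : ZMod 3 × ℤ :=
  (p.1, (p.2 + f.q p.1) % f.twol p.1)

/-- `ρ⁻¹(i,j) = (i, j − qᵢ)`. -/
def rhoInv (f : Tuple) (p : ZMod 3 × ℤ) : ZMod 3 × ℤ :=
  (p.1, (p.2 - f.q p.1) % f.twol p.1)

/-- `ι₃ = ρ ∘ ι₂ ∘ ρ⁻¹`. -/
def iota3 (f : Tuple) : ZMod 3 × ℤ → ZMod 3 × ℤ :=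
  rho f ∘ iota2 f ∘ rhoInv f

/-- The four involutions of `Γ(f)`, indexed by the colour `c ∈ {0,1,2,3}`. -/
def iota (f : Tuple) : Fin 4 → ZMod 3 × ℤ → ZMod 3 × ℤ
  | 0 => iota0 f
  | 1 => iota1 f
  | 2 => iota2 f
  | 3 => iota3 f

/-- One step along an edge of `Γ(f)` whose colour lies in `S`, within `V(f)`. -/
def Step (f : Tuple) (S : Set (Fin 4)) (a b : ZMod 3 × ℤ) : Prop :=
  a ∈ Vtx f ∧ b ∈ Vtx f ∧ ∃ c ∈ S, b = iota f c a

/-- The orbit relation on `V(f)` of the subgroup generated by the involutions with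
colours in `S` (the `S`-residue relation). -/
def OrbRel (f : Tuple) (S : Set (Fin 4)) : ZMod 3 × ℤ → ZMod 3 × ℤ → Prop :=
  Relation.EqvGen (Step f S)

/-- The subgroup generated by the colours in `S` has exactly three orbits on `V(f)`. -/
def ThreeOrbits (f : Tuple) (S : Set (Fin 4)) : Prop :=
  ∃ a b c, a ∈ Vtx f ∧ b ∈ Vtx f ∧ c ∈ Vtx f ∧
    ¬ OrbRel f S a b ∧ ¬ OrbRel f S a c ∧ ¬ OrbRel f S b c ∧
    ∀ v ∈ Vtx f, OrbRel f S a v ∨ OrbRel f S b v ∨ OrbRel f S c v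

/-- Admissibility: conditions (I)–(IV), (V), and (VI) (three `{2,3}`-residues). -/
def Admissible (f : Tuple) : Prop :=
  CondsI_IV f ∧ CondV f ∧ ThreeOrbits f {2, 3}

/-- `ψ₁(h₀,h₁,h₂;q₀,q₁,q₂) = (h₁,h₂,h₀;q₁,q₂,q₀)`. -/
def psi1 (f : Tuple) : Tuple := ⟨f.h1, f.h2, f.h0, f.q1, f.q2, f.q0⟩

/-- `ψ₂(h₀,h₁,h₂;q₀,q₁,q₂) = (h₂,h₁,h₀;q₀,q₂,q₁)`. -/
def psi2 (f : Tuple) : Tuple := ⟨f.h2, f.h1, f.h0, f.q0, f.q2, f.q1⟩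

/-- `ψ₃(h₀,h₁,h₂;q₀,q₁,q₂) = (h₀,h₁,h₂;−q₀,−q₁,−q₂)`, the `q`-entries reduced to their
least nonnegative residues mod the respective `2lᵢ`. -/
def psi3 (f : Tuple) : Tuple :=
  ⟨f.h0, f.h1, f.h2,
    (-f.q0) % (f.h2 + f.h0), (-f.q1) % (f.h0 + f.h1), (-f.q2) % (f.h1 + f.h2)⟩

/-- The 2-symmetric transformation `σ`, with the `q′`-entries reduced to their least
nonnegative residues mod the respective `2lᵢ′ = h′_{i−1} + h′ᵢ`. -/
def sigma (f : Tuple) : Tuple :=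
  if f.q0 = 0 then f
  else if f.q0 < f.h0 ∧ f.q0 < f.h2 then
    ⟨f.h0 + f.h1 - f.q0, f.q0, f.h2 + f.h1 - f.q0,
      (f.h0 + f.h1 + f.h2 - 2 * f.q0) % ((f.h2 + f.h1 - f.q0) + (f.h0 + f.h1 - f.q0)),
      (f.q0 + f.q1 + f.h1) % ((f.h0 + f.h1 - f.q0) + f.q0),
      (f.q0 + f.q2 + f.h1) % (f.q0 + (f.h2 + f.h1 - f.q0))⟩
  else if f.h0 < f.q0 ∧ f.h2 < f.q0 then
    ⟨f.q0 + f.h1 - f.h2, f.h0 + f.h2 - f.q0, f.q0 + f.h1 - f.h0,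
      f.h1 % ((f.q0 + f.h1 - f.h0) + (f.q0 + f.h1 - f.h2)),
      (f.q0 + f.q1 - f.h2) % ((f.q0 + f.h1 - f.h2) + (f.h0 + f.h2 - f.q0)),
      (f.q0 + f.q2 - f.h0) % ((f.h0 + f.h2 - f.q0) + (f.q0 + f.h1 - f.h0))⟩
  else if f.q0 < f.h2 then
    ⟨f.h1, f.h0, f.h1 + f.h2 - f.h0,
      (f.h1 + f.h2 - f.q0) % ((f.h1 + f.h2 - f.h0) + f.h1),
      f.q1 % (f.h1 + f.h0),
      (2 * f.q0 + f.q2 + f.h1 - f.h0) % (f.h0 + (f.h1 + f.h2 - f.h0))⟩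
  else
    ⟨f.h1 + f.h0 - f.h2, f.h2, f.h1,
      (f.h1 + f.h0 - f.q0) % (f.h1 + (f.h1 + f.h0 - f.h2)),
      (2 * f.q0 + f.q1 + f.h1 - f.h2) % ((f.h1 + f.h0 - f.h2) + f.h2),
      f.q2 % (f.h2 + f.h1)⟩

/-- The complexity `ν(f) = h₀ + h₁ + h₂`. -/
def nu (f : Tuple) : ℤ := f.h0 + f.h1 + f.h2

/-- `δ(f) = ν(σ(f)) − ν(f)`. -/
def delta (f : Tuple) : ℤ := nu (sigma f) - nu f

/-- One step of the action of a generator of `H` on admissible 6-tuples. -/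
def HStep (a b : Tuple) : Prop :=
  Admissible a ∧ Admissible b ∧ (b = psi1 a ∨ b = psi2 a ∨ b = psi3 a)

/-- `H`-equivalence: the orbit relation of `H = ⟨ψ₁,ψ₂,ψ₃⟩` on `ℱ`. -/
def HEquiv : Tuple → Tuple → Prop := Relation.EqvGen HStep

/-- One step of the action of a generator of `H′` on admissible 6-tuples. -/
def H'Step (a b : Tuple) : Prop :=
  Admissible a ∧ Admissible b ∧ (b = psi2 a ∨ b = psi3 a)

/-- `H′`-equivalence: the orbit relation of `H′ = ⟨ψ₂,ψ₃⟩` on `ℱ`. -/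
def H'Equiv : Tuple → Tuple → Prop := Relation.EqvGen H'Step

/-- One step of the action of a generator of `G` on admissible 6-tuples. -/
def GStep (a b : Tuple) : Prop :=
  Admissible a ∧ Admissible b ∧ (b = psi1 a ∨ b = psi2 a ∨ b = psi3 a ∨ b = sigma a)

/-- `G`-equivalence: the orbit relation of `G = ⟨ψ₁,ψ₂,ψ₃,σ⟩` on `ℱ`. -/
def GEquiv : Tuple → Tuple → Prop := Relation.EqvGen GStep

/-- Membership in the set `{0, r+1, r+2, …, s−1}`. -/
def inT (r s x : ℤ) : Prop := x = 0 ∨ (r < x ∧ x < s)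

/-- A trap of type `(r,s)`: `H`-equivalent to an admissible `(r,r,s;q₀,0,q₂)` with
`q₀+k(q₀+q₂), q₂+k(q₀+q₂) ∈ {0,r+1,…,s−1} (mod r+s)` for all `k ≥ 0`. -/
def IsTrapOfType (r s : ℤ) (f : Tuple) : Prop :=
  ∃ g : Tuple, Admissible g ∧ HEquiv f g ∧
    g.h0 = r ∧ g.h1 = r ∧ g.h2 = s ∧ g.q1 = 0 ∧
    ∀ k : ℕ, inT r s ((g.q0 + (k : ℤ) * (g.q0 + g.q2)) % (r + s)) ∧
             inT r s ((g.q2 + (k : ℤ) * (g.q0 + g.q2)) % (r + s))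

/-- A trap: a trap of some type `(r,s)` with `0 < r ≤ s`. -/
def IsTrap (f : Tuple) : Prop := ∃ r s : ℤ, 0 < r ∧ r ≤ s ∧ IsTrapOfType r s f

/-- The canonical representative conditions (a)–(i) (together with admissibility). -/
def Canonical (f : Tuple) : Prop :=
  Admissible f ∧
  (f.h0 ≤ f.h1 ∧ f.h1 ≤ f.h2) ∧
  (2 * f.q0 ≤ f.h2 + f.h0) ∧
  ((f.q0 = 0 ∨ 2 * f.q0 = f.h2 + f.h0) → 2 * f.q1 ≤ f.h0 + f.h1) ∧
  ((f.q0 = 0 ∨ 2 * f.q0 = f.h2 + f.h0) → (f.q1 = 0 ∨ 2 * f.q1 = f.h0 + f.h1) →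
    2 * f.q2 ≤ f.h1 + f.h2) ∧
  (f.h0 = f.h1 → f.q0 ≤ f.q2 ∧ f.q2 ≤ (-f.q0) % (f.h2 + f.h0)) ∧
  (f.h0 = f.h1 → (f.q2 = f.q0 ∨ f.q2 = (-f.q0) % (f.h2 + f.h0)) → f.q1 ≤ f.h1) ∧
  (f.h1 = f.h2 → f.q0 ≤ f.q1 ∧ f.q1 ≤ (-f.q0) % (f.h2 + f.h0)) ∧
  (f.h1 = f.h2 → (f.q1 = f.q0 ∨ f.q1 = (-f.q0) % (f.h2 + f.h0)) → f.q2 ≤ f.h2) ∧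
  (f.h0 = f.h1 ∧ f.h1 = f.h2 → f.q1 ≤ f.q2)

/-- A canonical 6-tuple is minimal if its complexity is minimal in its `G`-orbit. -/
def Minimal (f : Tuple) : Prop :=
  Canonical f ∧ ∀ g, GEquiv f g → nu f ≤ nu g

/-- A canonical 6-tuple is a root if every `G`-equivalent but not `H`-equivalent
6-tuple has strictly larger complexity. -/
def Root (f : Tuple) : Prop :=
  Canonical f ∧ ∀ g, GEquiv f g → ¬ HEquiv f g → nu f < nu g

/-- A colour-preserving isomorphism between `Γ(f)` and `Γ(f′)`. -/
def CPIso (f f' : Tuple) : Prop :=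
  ∃ φ : ZMod 3 × ℤ → ZMod 3 × ℤ, Set.BijOn φ (Vtx f) (Vtx f') ∧
    ∀ c : Fin 4, ∀ v ∈ Vtx f, φ (iota f c v) = iota f' c (φ v)

/-- The set of admissible 6-tuples, as a type. -/
abbrev AdmTuple := {f : Tuple // Admissible f}


/-! ### Arithmetic of the generators -/

/-- Conditions (I)–(V), written out in coordinates. -/
structure Good (f : Tuple) : Prop where
  h0_pos : 0 < f.h0
  h1_pos : 0 < f.h1
  h2_pos : 0 < f.h2
  h1_parity : f.h1 % 2 = f.h0 % 2
  h2_parity : f.h2 % 2 = f.h0 % 2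
  q0_nonneg : 0 ≤ f.q0
  q0_lt : f.q0 < f.h2 + f.h0
  q1_nonneg : 0 ≤ f.q1
  q1_lt : f.q1 < f.h0 + f.h1
  q2_nonneg : 0 ≤ f.q2
  q2_lt : f.q2 < f.h1 + f.h2
  q0_parity : (f.h0 + f.q0) % 2 = 1
  q1_parity : (f.h0 + f.q1) % 2 = 1
  q2_parity : (f.h0 + f.q2) % 2 = 1

theorem forall_zmod_three {P : ZMod 3 → Prop} : (∀ i, P i) ↔ P 0 ∧ P 1 ∧ P 2 := by
  refine ⟨fun h => ⟨h 0, h 1, h 2⟩, fun ⟨a, b, c⟩ i => ?_⟩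
  fin_cases i
  exacts [a, b, c]

theorem good_iff (f : Tuple) : Good f ↔ CondsI_IV f ∧ CondV f := by
  have e1 : (0 : ZMod 3) - 1 = 2 := by decide
  have e2 : (2 : ZMod 3) - 1 = 1 := by decide
  have n1 : (1 : ZMod 3) ≠ 0 := by decide
  have n2 : (2 : ZMod 3) ≠ 0 := by decide
  have n3 : (2 : ZMod 3) ≠ 1 := by decide
  simp only [CondsI_IV, CondI, CondII, CondIII, CondIV, CondV, forall_zmod_three,
    Tuple.twol, Tuple.h, Tuple.q, sub_self, if_true, e1, e2, n1, n2, n3, if_false,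
    true_and, and_true]
  constructor
  · rintro ⟨⟩
    and_intros <;> omega
  · intro
    constructor <;> omega

theorem Admissible.good {f : Tuple} (hf : Admissible f) : Good f :=
  (good_iff f).2 ⟨hf.1, hf.2.1⟩

theorem neg_emod_of_pos {q m : ℤ} (h0 : 0 < q) (h1 : q < m) : (-q) % m = m - q := by
  rw [← Int.add_emod_right, Int.emod_eq_of_lt] <;> omega

theorem neg_emod_neg_emod {q m : ℤ} (h0 : 0 ≤ q) (h1 : q < m) : (-((-q) % m)) % m = q := by
  rcases h0.eq_or_lt with rfl | h
  · simp
  · rw [neg_emod_of_pos h h1, neg_emod_of_pos] <;> omega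

theorem emod_congr {a b m : ℤ} (k : ℤ) (h : a = b + m * k) : a % m = b % m := by
  rw [h, Int.add_mul_emod_self_left]

theorem emod_congr' {a b m n : ℤ} (k : ℤ) (hm : m = n) (h : a = b + m * k) : a % m = b % n :=
  hm ▸ emod_congr k h

theorem Tuple.mk_congr {a b c d e g a' b' c' d' e' g' : ℤ} (ha : a = a') (hb : b = b')
    (hc : c = c') (hd : d = d') (he : e = e') (hg : g = g') :
    Tuple.mk a b c d e g = ⟨a', b', c', d', e', g'⟩ := by
  subst_vars
  rfl

theorem emod_parity {a m : ℤ} (hm : m % 2 = 0) : (a % m) % 2 = a % 2 :=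
  Int.emod_emod_of_dvd a (Int.dvd_of_emod_eq_zero hm)

theorem emod_eq_sub (a m : ℤ) : ∃ k, a % m = a + m * k :=
  ⟨-(a / m), by have := Int.emod_add_mul_ediv a m; linarith⟩

namespace Good

variable {f : Tuple}

theorem psi1 (hf : Good f) : Good (psi1 f) := by
  obtain ⟨⟩ := hf
  constructor <;> dsimp only [GMN.psi1] <;> omega

theorem psi2 (hf : Good f) : Good (psi2 f) := by
  obtain ⟨⟩ := hf
  constructor <;> dsimp only [GMN.psi2] <;> omega

theorem psi3 (hf : Good f) : Good (psi3 f) := by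
  obtain ⟨⟩ := hf
  constructor <;> dsimp only [GMN.psi3] <;>
    first
    | omega
    | (apply Int.emod_nonneg; omega)
    | (apply Int.emod_lt_of_pos; omega)
    | (rw [Int.add_emod, emod_parity (by omega)]; omega)

end Good

theorem psi3_psi3 {f : Tuple} (hf : Good f) : psi3 (psi3 f) = f := by
  obtain ⟨⟩ := hf
  simp only [psi3, neg_emod_neg_emod, *]

/-- The cases in the definition of `σ`. -/
theorem Good.sigma_cases {f : Tuple} (hf : Good f) :
    (f.q0 = 0) ∨ (0 < f.q0 ∧ f.q0 < f.h0 ∧ f.q0 < f.h2) ∨ (f.h0 < f.q0 ∧ f.h2 < f.q0) ∨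
      (f.h0 < f.q0 ∧ f.q0 < f.h2) ∨ (f.h2 < f.q0 ∧ f.q0 < f.h0) := by
  obtain ⟨⟩ := hf
  omega

theorem sigma_of_eq_zero {f : Tuple} (h : f.q0 = 0) : sigma f = f := by
  rw [sigma, if_pos h]

theorem sigma_of_lt {f : Tuple} (h : 0 < f.q0) (h0 : f.q0 < f.h0) (h2 : f.q0 < f.h2) :
    sigma f = ⟨f.h0 + f.h1 - f.q0, f.q0, f.h2 + f.h1 - f.q0,
      (f.h0 + f.h1 + f.h2 - 2 * f.q0) % ((f.h2 + f.h1 - f.q0) + (f.h0 + f.h1 - f.q0)),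
      (f.q0 + f.q1 + f.h1) % ((f.h0 + f.h1 - f.q0) + f.q0),
      (f.q0 + f.q2 + f.h1) % (f.q0 + (f.h2 + f.h1 - f.q0))⟩ := by
  rw [sigma, if_neg h.ne', if_pos ⟨h0, h2⟩]

theorem sigma_of_gt {f : Tuple} (hf : Good f) (h0 : f.h0 < f.q0) (h2 : f.h2 < f.q0) :
    sigma f = ⟨f.q0 + f.h1 - f.h2, f.h0 + f.h2 - f.q0, f.q0 + f.h1 - f.h0,
      f.h1 % ((f.q0 + f.h1 - f.h0) + (f.q0 + f.h1 - f.h2)),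
      (f.q0 + f.q1 - f.h2) % ((f.q0 + f.h1 - f.h2) + (f.h0 + f.h2 - f.q0)),
      (f.q0 + f.q2 - f.h0) % ((f.h0 + f.h2 - f.q0) + (f.q0 + f.h1 - f.h0))⟩ := by
  have := hf.h0_pos
  rw [sigma, if_neg (by omega), if_neg (by omega), if_pos ⟨h0, h2⟩]

theorem sigma_of_between {f : Tuple} (hf : Good f) (h0 : f.h0 < f.q0) (h2 : f.q0 < f.h2) :
    sigma f = ⟨f.h1, f.h0, f.h1 + f.h2 - f.h0,
      (f.h1 + f.h2 - f.q0) % ((f.h1 + f.h2 - f.h0) + f.h1),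
      f.q1 % (f.h1 + f.h0),
      (2 * f.q0 + f.q2 + f.h1 - f.h0) % (f.h0 + (f.h1 + f.h2 - f.h0))⟩ := by
  have := hf.h0_pos
  rw [sigma, if_neg (by omega), if_neg (by omega), if_neg (by omega), if_pos h2]

theorem sigma_of_between' {f : Tuple} (hf : Good f) (h2 : f.h2 < f.q0) (h0 : f.q0 < f.h0) :
    sigma f = ⟨f.h1 + f.h0 - f.h2, f.h2, f.h1,
      (f.h1 + f.h0 - f.q0) % (f.h1 + (f.h1 + f.h0 - f.h2)),
      (2 * f.q0 + f.q1 + f.h1 - f.h2) % ((f.h1 + f.h0 - f.h2) + f.h2),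
      f.q2 % (f.h2 + f.h1)⟩ := by
  have := hf.h2_pos
  rw [sigma, if_neg (by omega), if_neg (by omega), if_neg (by omega), if_neg (by omega)]

theorem sigma_psi2 {f : Tuple} (hf : Good f) : sigma (psi2 f) = psi2 (sigma f) := by
  have hg := hf.psi2
  rcases hf.sigma_cases with h | ⟨h, h0, h2⟩ | ⟨h0, h2⟩ | ⟨h0, h2⟩ | ⟨h2, h0⟩
  · rw [sigma_of_eq_zero h, sigma_of_eq_zero (show (psi2 f).q0 = 0 from h)]
  · rw [sigma_of_lt h h0 h2, sigma_of_lt (f := psi2 f) h h2 h0]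
    refine Tuple.mk_congr ?_ ?_ ?_ ?_ ?_ ?_ <;> simp only [psi2] <;> ring_nf
  · rw [sigma_of_gt hf h0 h2, sigma_of_gt hg h2 h0]
    refine Tuple.mk_congr ?_ ?_ ?_ ?_ ?_ ?_ <;> simp only [psi2] <;> ring_nf
  · rw [sigma_of_between hf h0 h2, sigma_of_between' hg h0 h2]
    refine Tuple.mk_congr ?_ ?_ ?_ ?_ ?_ ?_ <;> simp only [psi2] <;> ring_nf
  · rw [sigma_of_between' hf h2 h0, sigma_of_between hg h2 h0]
    refine Tuple.mk_congr ?_ ?_ ?_ ?_ ?_ ?_ <;> simp only [psi2] <;> ring_nf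

theorem sigma_psi3 {f : Tuple} (hf : Good f) : sigma (psi3 f) = psi3 (sigma f) := by
  have hg := hf.psi3
  obtain ⟨k1, hk1⟩ := emod_eq_sub (-f.q1) (f.h0 + f.h1)
  obtain ⟨k2, hk2⟩ := emod_eq_sub (-f.q2) (f.h1 + f.h2)
  have e1 : (psi3 f).q1 = -f.q1 + (f.h0 + f.h1) * k1 := hk1
  have e2 : (psi3 f).q2 = -f.q2 + (f.h1 + f.h2) * k2 := hk2
  have hq := hf.q0_lt
  have hc := hf.sigma_cases
  have := hf.h0_pos
  have := hf.h2_pos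
  by_cases h : f.q0 = 0
  · rw [sigma_of_eq_zero h, sigma_of_eq_zero]
    simp [psi3, h]
  have e0 : (psi3 f).q0 = f.h2 + f.h0 - f.q0 := neg_emod_of_pos (by omega) hq
  have a0 : (psi3 f).h0 = f.h0 := rfl
  have a1 : (psi3 f).h1 = f.h1 := rfl
  have a2 : (psi3 f).h2 = f.h2 := rfl
  have neg : ∀ a m : ℤ, (-(a % m)) % m = (-a) % m := fun a m => by
    obtain ⟨k, hk⟩ := emod_eq_sub a m
    exact emod_congr (-k) (by rw [hk]; ring)
  rcases hc with h | ⟨h, h0, h2⟩ | ⟨h0, h2⟩ | ⟨h0, h2⟩ | ⟨h2, h0⟩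
  · contradiction
  · rw [sigma_of_lt h h0 h2, sigma_of_gt hg (by omega) (by omega)]
    simp only [a0, a1, a2, e0, e1, e2]
    simp only [psi3, neg]
    refine Tuple.mk_congr (by ring) (by ring) (by ring) ?_ ?_ ?_
    · exact emod_congr' (1) (by ring) (by ring)
    · exact emod_congr' (1 + k1) (by ring) (by ring)
    · exact emod_congr' (1 + k2) (by ring) (by ring)
  · rw [sigma_of_gt hf h0 h2, sigma_of_lt (by omega) (by omega) (by omega)]
    simp only [a0, a1, a2, e0, e1, e2]
    simp only [psi3, neg]
    refine Tuple.mk_congr (by ring) (by ring) (by ring) ?_ ?_ ?_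
    · exact emod_congr' (1) (by ring) (by ring)
    · exact emod_congr' (1 + k1) (by ring) (by ring)
    · exact emod_congr' (1 + k2) (by ring) (by ring)
  · rw [sigma_of_between hf h0 h2, sigma_of_between hg (by omega) (by omega)]
    simp only [a0, a1, a2, e0, e1, e2]
    simp only [psi3, neg]
    refine Tuple.mk_congr (by ring) (by ring) (by ring) ?_ ?_ ?_
    · exact emod_congr' (1) (by ring) (by ring)
    · exact emod_congr' (k1) (by ring) (by ring)
    · exact emod_congr' (2 + k2) (by ring) (by ring)
  · rw [sigma_of_between' hf h2 h0, sigma_of_between' hg (by omega) (by omega)]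
    simp only [a0, a1, a2, e0, e1, e2]
    simp only [psi3, neg]
    refine Tuple.mk_congr (by ring) (by ring) (by ring) ?_ ?_ ?_
    · exact emod_congr' (1) (by ring) (by ring)
    · exact emod_congr' (2 + k1) (by ring) (by ring)
    · exact emod_congr' (k2) (by ring) (by ring)

theorem Good.sigma {f : Tuple} (hf : Good f) : Good (sigma f) := by
  have hc := hf.sigma_cases
  rcases hc with h | ⟨h, h0, h2⟩ | ⟨h0, h2⟩ | ⟨h0, h2⟩ | ⟨h2, h0⟩
  · rwa [sigma_of_eq_zero h]
  · rw [sigma_of_lt h h0 h2]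
    obtain ⟨⟩ := hf
    constructor <;> dsimp only <;>
      first
      | omega
      | (apply Int.emod_nonneg; omega)
      | (apply Int.emod_lt_of_pos; omega)
      | (rw [Int.add_emod, emod_parity (by omega)]; omega)
  · rw [sigma_of_gt hf h0 h2]
    obtain ⟨⟩ := hf
    constructor <;> dsimp only <;>
      first
      | omega
      | (apply Int.emod_nonneg; omega)
      | (apply Int.emod_lt_of_pos; omega)
      | (rw [Int.add_emod, emod_parity (by omega)]; omega)
  · rw [sigma_of_between hf h0 h2]
    obtain ⟨⟩ := hf
    constructor <;> dsimp only <;>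
      first
      | omega
      | (apply Int.emod_nonneg; omega)
      | (apply Int.emod_lt_of_pos; omega)
      | (rw [Int.add_emod, emod_parity (by omega)]; omega)
  · rw [sigma_of_between' hf h2 h0]
    obtain ⟨⟩ := hf
    constructor <;> dsimp only <;>
      first
      | omega
      | (apply Int.emod_nonneg; omega)
      | (apply Int.emod_lt_of_pos; omega)
      | (rw [Int.add_emod, emod_parity (by omega)]; omega)

theorem emod_eq_of_eq_add {a b m : ℤ} (k : ℤ) (h0 : 0 ≤ b) (h1 : b < m) (h : a = b + m * k) :
    a % m = b := by
  rw [emod_congr k h, Int.emod_eq_of_lt h0 h1]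

theorem sigma_sigma {f : Tuple} (hf : Good f) : sigma (sigma f) = f := by
  have hg := hf.sigma
  have hc := hf.sigma_cases
  rcases hc with h | ⟨h, h0, h2⟩ | ⟨h0, h2⟩ | ⟨h0, h2⟩ | ⟨h2, h0⟩
  · rw [sigma_of_eq_zero h, sigma_of_eq_zero h]
  · have e := sigma_of_lt h h0 h2
    obtain ⟨k1, hk1⟩ := emod_eq_sub (f.q0 + f.q1 + f.h1) ((f.h0 + f.h1 - f.q0) + f.q0)
    obtain ⟨k2, hk2⟩ := emod_eq_sub (f.q0 + f.q2 + f.h1) (f.q0 + (f.h2 + f.h1 - f.q0))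
    obtain ⟨⟩ := hf
    rw [Int.emod_eq_of_lt (by omega) (by omega), hk1, hk2] at e
    rw [e] at hg ⊢
    rw [sigma_of_gt hg (by dsimp only; omega) (by dsimp only; omega)]
    refine Tuple.mk_congr (by ring) (by ring) (by ring)
      (emod_eq_of_eq_add 0 ?_ ?_ (by ring))
      (emod_eq_of_eq_add (1 + k1) ?_ ?_ (by ring))
      (emod_eq_of_eq_add (1 + k2) ?_ ?_ (by ring)) <;>
    first | assumption | (dsimp only; omega)
  · have e := sigma_of_gt hf h0 h2
    obtain ⟨k1, hk1⟩ := emod_eq_sub (f.q0 + f.q1 - f.h2)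
      ((f.q0 + f.h1 - f.h2) + (f.h0 + f.h2 - f.q0))
    obtain ⟨k2, hk2⟩ := emod_eq_sub (f.q0 + f.q2 - f.h0)
      ((f.h0 + f.h2 - f.q0) + (f.q0 + f.h1 - f.h0))
    obtain ⟨⟩ := hf
    rw [Int.emod_eq_of_lt (by omega) (by omega), hk1, hk2] at e
    rw [e] at hg ⊢
    rw [sigma_of_lt (by dsimp only; omega) (by dsimp only; omega) (by dsimp only; omega)]
    refine Tuple.mk_congr (by ring) (by ring) (by ring)
      (emod_eq_of_eq_add 0 ?_ ?_ (by ring))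
      (emod_eq_of_eq_add (1 + k1) ?_ ?_ (by ring))
      (emod_eq_of_eq_add (1 + k2) ?_ ?_ (by ring)) <;>
    first | assumption | (dsimp only; omega)
  · have e := sigma_of_between hf h0 h2
    obtain ⟨k2, hk2⟩ := emod_eq_sub (2 * f.q0 + f.q2 + f.h1 - f.h0)
      (f.h0 + (f.h1 + f.h2 - f.h0))
    obtain ⟨⟩ := hf
    rw [Int.emod_eq_of_lt (by omega) (by omega), hk2, Int.emod_eq_of_lt (by omega) (by omega)] at e
    rw [e] at hg ⊢
    rw [sigma_of_between hg (by dsimp only; omega) (by dsimp only; omega)]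
    refine Tuple.mk_congr (by ring) (by ring) (by ring)
      (emod_eq_of_eq_add 0 ?_ ?_ (by ring))
      (emod_eq_of_eq_add 0 ?_ ?_ (by ring))
      (emod_eq_of_eq_add (2 + k2) ?_ ?_ (by ring)) <;>
    first | assumption | (dsimp only; omega)
  · have e := sigma_of_between' hf h2 h0
    obtain ⟨k1, hk1⟩ := emod_eq_sub (2 * f.q0 + f.q1 + f.h1 - f.h2)
      ((f.h1 + f.h0 - f.h2) + f.h2)
    obtain ⟨⟩ := hf
    rw [Int.emod_eq_of_lt (by omega) (by omega), hk1,
      Int.emod_eq_of_lt (a := f.q2) (by omega) (by omega)] at e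
    rw [e] at hg ⊢
    rw [sigma_of_between' hg (by dsimp only; omega) (by dsimp only; omega)]
    refine Tuple.mk_congr (by ring) (by ring) (by ring)
      (emod_eq_of_eq_add 0 ?_ ?_ (by ring))
      (emod_eq_of_eq_add (2 + k1) ?_ ?_ (by ring))
      (emod_eq_of_eq_add 0 ?_ ?_ (by ring)) <;>
    first | assumption | (dsimp only; omega)

/-! ### Descent -/

/-- If `σ` lowers the complexity then `h₁` is the strict minimum of the `hᵢ`. -/
theorem Good.lt_of_nu_sigma_lt {f : Tuple} (hf : Good f) (h : nu (GMN.sigma f) < nu f) :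
    f.h1 < f.h0 ∧ f.h1 < f.h2 := by
  rcases hf.sigma_cases with c | ⟨c, h0, h2⟩ | ⟨h0, h2⟩ | ⟨h0, h2⟩ | ⟨h2, h0⟩
  · rw [sigma_of_eq_zero c] at h
    omega
  · rw [sigma_of_lt c h0 h2] at h
    dsimp only [nu] at h
    omega
  · rw [sigma_of_gt hf h0 h2] at h
    dsimp only [nu] at h
    omega
  · rw [sigma_of_between hf h0 h2] at h
    dsimp only [nu] at h
    omega
  · rw [sigma_of_between' hf h2 h0] at h
    dsimp only [nu] at h
    omega

/-- None of the `hᵢ` is strictly smaller than both others. -/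
def NoStrictMin (f : Tuple) : Prop :=
  ¬ (f.h1 < f.h0 ∧ f.h1 < f.h2) ∧ ¬ (f.h2 < f.h0 ∧ f.h2 < f.h1) ∧ ¬ (f.h0 < f.h1 ∧ f.h0 < f.h2)

theorem Good.noStrictMin_of_nu_sigma_eq {f : Tuple} (hf : Good f)
    (h : nu (GMN.sigma f) = nu f) :
    GMN.sigma f = f ∨ NoStrictMin f ∧ NoStrictMin (GMN.sigma f) := by
  have hc := hf.sigma_cases
  have p := hf.h1_parity
  have p' := hf.h2_parity
  have p'' := hf.q0_parity
  rcases hc with c | ⟨c, h0, h2⟩ | ⟨h0, h2⟩ | ⟨h0, h2⟩ | ⟨h2, h0⟩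
  · exact .inl (sigma_of_eq_zero c)
  all_goals right
  · rw [sigma_of_lt c h0 h2] at h
    dsimp only [nu] at h
    omega
  · rw [sigma_of_gt hf h0 h2] at h
    dsimp only [nu] at h
    omega
  · rw [sigma_of_between hf h0 h2] at h ⊢
    dsimp only [nu, NoStrictMin] at h ⊢
    omega
  · rw [sigma_of_between' hf h2 h0] at h ⊢
    dsimp only [nu, NoStrictMin] at h ⊢
    omega

/-- `g` arises from `f` by replacing one of the three curves: `g` is one of the three conjugates
of `σ` by powers of `ψ₁`, applied to `f`. -/
def Nbr (f g : Tuple) : Prop :=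
  g = sigma f ∨ g = psi1 (psi1 (sigma (psi1 f))) ∨ g = psi1 (sigma (psi1 (psi1 f)))

theorem nu_psi1 (f : Tuple) : nu (psi1 f) = nu f := by
  simp only [nu, psi1]; ring

theorem nu_psi2 (f : Tuple) : nu (psi2 f) = nu f := by
  simp only [nu, psi2]; ring

theorem Nbr.psi1 {f g : Tuple} (h : Nbr f g) : Nbr (psi1 f) (psi1 g) := by
  rcases h with rfl | rfl | rfl
  exacts [.inr (.inr rfl), .inl rfl, .inr (.inl rfl)]

theorem Nbr.psi2 {f g : Tuple} (hf : Good f) (h : Nbr f g) : Nbr (psi2 f) (psi2 g) := by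
  rcases h with rfl | rfl | rfl
  · exact .inl (sigma_psi2 hf).symm
  · exact .inr (.inr (congrArg GMN.psi1 (sigma_psi2 hf.psi1).symm))
  · exact .inr (.inl (congrArg (fun x => GMN.psi1 (GMN.psi1 x)) (sigma_psi2 hf.psi1.psi1).symm))

theorem Nbr.psi3 {f g : Tuple} (hf : Good f) (h : Nbr f g) : Nbr (psi3 f) (psi3 g) := by
  rcases h with rfl | rfl | rfl
  · exact .inl (sigma_psi3 hf).symm
  · exact .inr (.inl (congrArg (fun x => GMN.psi1 (GMN.psi1 x)) (sigma_psi3 hf.psi1).symm))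
  · exact .inr (.inr (congrArg GMN.psi1 (sigma_psi3 hf.psi1.psi1).symm))

theorem Nbr.symm {f g : Tuple} (hf : Good f) (h : Nbr f g) : Nbr g f := by
  rcases h with rfl | rfl | rfl
  · exact .inl (sigma_sigma hf).symm
  · exact .inr (.inl (congrArg (fun x => GMN.psi1 (GMN.psi1 x)) (sigma_sigma hf.psi1).symm))
  · exact .inr (.inr (congrArg GMN.psi1 (sigma_sigma hf.psi1.psi1).symm))

theorem Nbr.eq_of_nu_lt {f g g' : Tuple} (hf : Good f) (h : Nbr f g) (h' : Nbr f g')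
    (hg : nu g < nu f) (hg' : nu g' < nu f) : g = g' := by
  have a0 := hf.lt_of_nu_sigma_lt
  have a1 : nu (sigma (GMN.psi1 f)) < nu f → f.h2 < f.h1 ∧ f.h2 < f.h0 := fun h =>
    hf.psi1.lt_of_nu_sigma_lt (by rwa [nu_psi1])
  have a2 : nu (sigma (GMN.psi1 (GMN.psi1 f))) < nu f → f.h0 < f.h2 ∧ f.h0 < f.h1 := fun h =>
    hf.psi1.psi1.lt_of_nu_sigma_lt (by rwa [nu_psi1, nu_psi1])
  rcases h with rfl | rfl | rfl <;> rcases h' with rfl | rfl | rfl <;>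
    first
    | rfl
    | (try rw [nu_psi1] at hg
       try rw [nu_psi1] at hg
       try rw [nu_psi1] at hg'
       try rw [nu_psi1] at hg'
       omega)

theorem NoStrictMin.psi1 {f : Tuple} (h : NoStrictMin f) : NoStrictMin (psi1 f) := by
  unfold NoStrictMin GMN.psi1 at *
  dsimp only
  omega

theorem NoStrictMin.nu_le {f g : Tuple} (hm : NoStrictMin f) (hf : Good f) (h : Nbr f g) :
    nu f ≤ nu g := by
  rcases h with rfl | rfl | rfl
  · exact not_lt.1 fun h => hm.1 (hf.lt_of_nu_sigma_lt h)
  · rw [nu_psi1, nu_psi1, ← nu_psi1 f]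
    exact not_lt.1 fun h => hm.psi1.1 (hf.psi1.lt_of_nu_sigma_lt h)
  · rw [nu_psi1, ← nu_psi1 f, ← nu_psi1 (GMN.psi1 f)]
    exact not_lt.1 fun h => hm.psi1.psi1.1 (hf.psi1.psi1.lt_of_nu_sigma_lt h)

/-- Successively replacing curves, lowering the complexity each time, leads from `f` to a local
minimum of complexity `n`. -/
inductive Descends (n : ℤ) : Tuple → Prop
  | base {f : Tuple} : Good f → (∀ g, Nbr f g → nu f ≤ nu g) → nu f = n → Descends n f
  | step {f g : Tuple} : Good f → Nbr f g → nu g < nu f → Descends n g → Descends n f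

namespace Descends

variable {n : ℤ} {f : Tuple}

theorem le_nu (h : Descends n f) : n ≤ nu f := by
  induction h with
  | base _ _ h => exact h.ge
  | step _ _ h _ ih => omega

theorem psi1 (h : Descends n f) : Descends n (psi1 f) := by
  induction h with
  | base hf hm hn =>
    refine base hf.psi1 (fun g hg => ?_) (by rwa [nu_psi1])
    rw [nu_psi1, ← nu_psi1 g, ← nu_psi1 (GMN.psi1 g)]
    exact hm _ hg.psi1.psi1
  | step hf hg hlt _ ih => exact step hf.psi1 hg.psi1 (by rwa [nu_psi1, nu_psi1]) ih

theorem psi2 (h : Descends n f) : Descends n (psi2 f) := by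
  induction h with
  | base hf hm hn =>
    refine base hf.psi2 (fun g hg => ?_) (by rwa [nu_psi2])
    rw [nu_psi2, ← nu_psi2 g]
    exact hm _ (hg.psi2 hf.psi2)
  | step hf hg hlt _ ih => exact step hf.psi2 (hg.psi2 hf) (by rwa [nu_psi2, nu_psi2]) ih

theorem psi3 (h : Descends n f) : Descends n (psi3 f) := by
  induction h with
  | base hf hm hn =>
    refine base hf.psi3 (fun g hg => ?_) hn
    exact hm (GMN.psi3 g) (by simpa only [psi3_psi3 hf] using hg.psi3 hf.psi3)
  | step hf hg hlt _ ih => exact step hf.psi3 (hg.psi3 hf) hlt ih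

theorem sigma (h : Descends n f) (hf : Good f) : Descends n (sigma f) := by
  have hb : Nbr f (GMN.sigma f) := .inl rfl
  rcases lt_trichotomy (nu (GMN.sigma f)) (nu f) with hlt | heq | hgt
  · cases h with
    | base _ hm _ => exact absurd (hm _ hb) (not_le.2 hlt)
    | step _ hg hlt' h => rwa [hb.eq_of_nu_lt hf hg hlt hlt']
  · rcases hf.noStrictMin_of_nu_sigma_eq heq with e | ⟨hm, hm'⟩
    · rwa [e]
    · cases h with
      | base _ _ hn => exact base hf.sigma (fun g hg => hm'.nu_le hf.sigma hg) (heq.trans hn)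
      | step _ hg hlt' _ => exact absurd (hm.nu_le hf hg) (not_le.2 hlt')
  · exact step hf.sigma (hb.symm hf) hgt h

theorem iff_of_gEquiv {g : Tuple} (h : GEquiv f g) : Descends n f ↔ Descends n g := by
  induction h with
  | rel a b hab =>
    obtain ⟨ha, -, rfl | rfl | rfl | rfl⟩ := hab
    · exact ⟨psi1, fun h => h.psi1.psi1⟩
    · exact ⟨psi2, fun h => h.psi2⟩
    · exact ⟨psi3, fun h => by simpa only [psi3_psi3 ha.good] using h.psi3⟩
    · exact ⟨fun h => h.sigma ha.good, fun h => by
        simpa only [sigma_sigma ha.good] using h.sigma ha.good.sigma⟩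
  | refl => rfl
  | symm _ _ _ ih => exact ih.symm
  | trans _ _ _ _ _ ih ih' => exact ih.trans ih'

end Descends

/-- A local minimum of the complexity is a global minimum. -/
theorem Good.nu_le_of_gEquiv {f g : Tuple} (hf : Good f) (hm : ∀ g, Nbr f g → nu f ≤ nu g)
    (h : GEquiv f g) : nu f ≤ nu g :=
  ((Descends.iff_of_gEquiv h).1 (.base hf hm rfl)).le_nu

/-- The complexity of `σ(f)` in terms of `f`. -/
theorem Good.nu_sigma_le_iff {f : Tuple} (hf : Good f) :
    nu f ≤ nu (GMN.sigma f) ↔ f.q0 < f.h1 ∨ f.h0 + f.h2 - f.h1 < f.q0 ∨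
      (f.h0 ≤ f.h1 ∧ f.h0 < f.q0 ∧ f.q0 < f.h2) ∨ (f.h2 ≤ f.h1 ∧ f.h2 < f.q0 ∧ f.q0 < f.h0) := by
  have hc := hf.sigma_cases
  have p := hf.h1_parity
  have p' := hf.h2_parity
  have p'' := hf.q0_parity
  have := hf.h1_pos
  rcases hc with c | ⟨c, h0, h2⟩ | ⟨h0, h2⟩ | ⟨h0, h2⟩ | ⟨h2, h0⟩
  · rw [sigma_of_eq_zero c]
    omega
  · rw [sigma_of_lt c h0 h2]
    dsimp only [nu]
    omega
  · rw [sigma_of_gt hf h0 h2]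
    dsimp only [nu]
    omega
  · rw [sigma_of_between hf h0 h2]
    dsimp only [nu]
    omega
  · rw [sigma_of_between' hf h2 h0]
    dsimp only [nu]
    omega

/-! ### Counting `{2,3}`-residues by invariant two-valued functions -/

/-- A two-valued function on `ℤ₃ × ℤ` that is periodic in the second coordinate and invariant under
`ι₂` and `ι₃`. -/
structure IsCol (f : Tuple) (c : ZMod 3 → ℤ → Bool) : Prop where
  periodic : ∀ i x, c i (x + f.twol i) = c i x
  arc2 : ∀ i t, 0 ≤ t → t < f.h i → c i t = c (i + 1) (-1 - t)
  arc3 : ∀ i t, 0 ≤ t → t < f.h i → c i (t + f.q i) = c (i + 1) (-1 - t + f.q (i + 1))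

/-- `IsCol` in coordinates. -/
structure IsCol3 (f : Tuple) (A B C : ℤ → Bool) : Prop where
  perA : ∀ x, A (x + (f.h2 + f.h0)) = A x
  perB : ∀ x, B (x + (f.h0 + f.h1)) = B x
  perC : ∀ x, C (x + (f.h1 + f.h2)) = C x
  arc2A : ∀ t, 0 ≤ t → t < f.h0 → A t = B (-1 - t)
  arc2B : ∀ t, 0 ≤ t → t < f.h1 → B t = C (-1 - t)
  arc2C : ∀ t, 0 ≤ t → t < f.h2 → C t = A (-1 - t)
  arc3A : ∀ t, 0 ≤ t → t < f.h0 → A (t + f.q0) = B (-1 - t + f.q1)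
  arc3B : ∀ t, 0 ≤ t → t < f.h1 → B (t + f.q1) = C (-1 - t + f.q2)
  arc3C : ∀ t, 0 ≤ t → t < f.h2 → C (t + f.q2) = A (-1 - t + f.q0)

theorem isCol_iff {f : Tuple} {c : ZMod 3 → ℤ → Bool} :
    IsCol f c ↔ IsCol3 f (c 0) (c 1) (c 2) := by
  have e1 : (0 : ZMod 3) - 1 = 2 := by decide
  have e2 : (2 : ZMod 3) - 1 = 1 := by decide
  have e3 : (1 : ZMod 3) + 1 = 2 := by decide
  have e4 : (2 : ZMod 3) + 1 = 0 := by decide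
  have n1 : (1 : ZMod 3) ≠ 0 := by decide
  have n2 : (2 : ZMod 3) ≠ 0 := by decide
  have n3 : (2 : ZMod 3) ≠ 1 := by decide
  constructor
  · rintro ⟨h1, h2, h3⟩
    simp only [forall_zmod_three, Tuple.twol, Tuple.h, Tuple.q,
      sub_self, zero_add, if_true, e1, e2, e3, e4, n1, n2, n3, if_false] at h1 h2 h3
    exact ⟨h1.1, h1.2.1, h1.2.2, h2.1, h2.2.1, h2.2.2, h3.1, h3.2.1, h3.2.2⟩
  · rintro ⟨⟩
    constructor <;>
    · simp only [forall_zmod_three, Tuple.twol, Tuple.h, Tuple.q,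
        sub_self, zero_add, if_true, e1, e2, e3, e4, n1, n2, n3, if_false]
      and_intros <;> assumption

/-- The values on the `0`-th circle determined by those on the two others. -/
def extend (f : Tuple) (B C : ℤ → Bool) (x : ℤ) : Bool :=
  if x % (f.h2 + f.h0) < f.h0 then B (-1 - x % (f.h2 + f.h0))
  else C (f.h2 + f.h0 - 1 - x % (f.h2 + f.h0))

theorem extend_add (f : Tuple) (B C : ℤ → Bool) (x : ℤ) :
    extend f B C (x + (f.h2 + f.h0)) = extend f B C x := by
  simp only [extend, Int.add_emod_right]

theorem extend_of_lt {f : Tuple} (h2 : 0 < f.h2) (B C : ℤ → Bool) {x : ℤ} (hx : 0 ≤ x)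
    (hx' : x < f.h0) : extend f B C x = B (-1 - x) := by
  rw [extend, Int.emod_eq_of_lt hx (by omega), if_pos hx']

theorem extend_of_ge {f : Tuple} (h0 : 0 < f.h0) (B C : ℤ → Bool) {x : ℤ} (hx : f.h0 ≤ x)
    (hx' : x < f.h2 + f.h0) : extend f B C x = C (f.h2 + f.h0 - 1 - x) := by
  rw [extend, Int.emod_eq_of_lt (by omega) hx', if_neg (by omega)]

theorem apply_add_mul_of_periodic {A : ℤ → Bool} {m : ℤ} (h : ∀ x, A (x + m) = A x) (x k : ℤ) :
    A (x + m * k) = A x := by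
  have : Function.Periodic A m := h
  rw [mul_comm]
  exact this.int_mul k x

theorem apply_emod_of_periodic {A : ℤ → Bool} {m : ℤ} (h : ∀ x, A (x + m) = A x) (x : ℤ) :
    A (x % m) = A x := by
  conv_rhs => rw [← Int.emod_add_mul_ediv x m]
  exact (apply_add_mul_of_periodic h _ _).symm

namespace IsCol3

variable {f : Tuple} {A B C : ℤ → Bool}

theorem eq_extend (h : IsCol3 f A B C) (h0 : 0 < f.h0) (h2 : 0 < f.h2) : A = extend f B C := by
  funext x
  have hm := Int.emod_nonneg x (show f.h2 + f.h0 ≠ 0 by omega)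
  have hm' := Int.emod_lt_of_pos x (show 0 < f.h2 + f.h0 by omega)
  rw [← apply_emod_of_periodic h.perA, extend]
  split_ifs with hlt
  · exact h.arc2A _ hm hlt
  · rw [h.arc2C _ (by omega) (by omega), ← h.perA (-1 - _)]
    congr 1
    ring

theorem of_extend (h0 : 0 < f.h0) (h2 : 0 < f.h2)
    (perB : ∀ x, B (x + (f.h0 + f.h1)) = B x)
    (perC : ∀ x, C (x + (f.h1 + f.h2)) = C x)
    (arc2B : ∀ t, 0 ≤ t → t < f.h1 → B t = C (-1 - t))
    (arc3B : ∀ t, 0 ≤ t → t < f.h1 → B (t + f.q1) = C (-1 - t + f.q2))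
    (arc3AC : ∀ A : ℤ → Bool, (∀ x, A (x + (f.h2 + f.h0)) = A x) →
      (∀ x, 0 ≤ x → x < f.h0 → A x = B (-1 - x)) →
      (∀ x, f.h0 ≤ x → x < f.h2 + f.h0 → A x = C (f.h2 + f.h0 - 1 - x)) →
      (∀ t, 0 ≤ t → t < f.h0 → A (t + f.q0) = B (-1 - t + f.q1)) ∧
        ∀ t, 0 ≤ t → t < f.h2 → C (t + f.q2) = A (-1 - t + f.q0)) :
    IsCol3 f (extend f B C) B C where
  perA := extend_add f B C
  perB := perB
  perC := perC
  arc2A t ht ht' := extend_of_lt h2 B C ht ht'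
  arc2B := arc2B
  arc2C t ht ht' := by
    rw [← extend_add, extend_of_ge h0 B C (by omega) (by omega)]
    congr 1
    ring
  arc3A := (arc3AC _ (extend_add f B C) (fun _ => extend_of_lt h2 B C)
    fun _ => extend_of_ge h0 B C).1
  arc3B := arc3B
  arc3C := (arc3AC _ (extend_add f B C) (fun _ => extend_of_lt h2 B C)
    fun _ => extend_of_ge h0 B C).2

end IsCol3

/-- The first case of `σ`, without reduction of the `q`-entries. -/
def sigmaLt (f : Tuple) : Tuple :=
  ⟨f.h0 + f.h1 - f.q0, f.q0, f.h2 + f.h1 - f.q0,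
    f.h0 + f.h1 + f.h2 - 2 * f.q0, f.q0 + f.q1 + f.h1, f.q0 + f.q2 + f.h1⟩

/-- The second case of `σ`, without reduction of the `q`-entries. -/
def sigmaGt (f : Tuple) : Tuple :=
  ⟨f.q0 + f.h1 - f.h2, f.h0 + f.h2 - f.q0, f.q0 + f.h1 - f.h0,
    f.h1, f.q0 + f.q1 - f.h2, f.q0 + f.q2 - f.h0⟩

/-- The last case of `σ`, without reduction of the `q`-entries. -/
def sigmaBetween (f : Tuple) : Tuple :=
  ⟨f.h1 + f.h0 - f.h2, f.h2, f.h1,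
    f.h1 + f.h0 - f.q0, 2 * f.q0 + f.q1 + f.h1 - f.h2, f.q2⟩

namespace IsCol3

variable {f : Tuple} {A B C : ℤ → Bool}

theorem sigmaLt (h : IsCol3 f A B C) (h1p : 0 < f.h1) (hq : 0 < f.q0) (hq0 : f.q0 < f.h0)
    (hq2 : f.q0 < f.h2) :
    IsCol3 (sigmaLt f)
      (extend (sigmaLt f) (fun x => B (x - f.q0)) fun x => C (f.q2 - 1 - x))
      (fun x => B (x - f.q0)) (fun x => C (f.q2 - 1 - x)) := by
  obtain ⟨perA, perB, perC, arc2A, arc2B, arc2C, arc3A, arc3B, arc3C⟩ := h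
  apply of_extend
  all_goals
    obtain ⟨h0, h1, h2, q0, q1, q2⟩ := f
    dsimp only [GMN.sigmaLt] at *
  · omega
  · omega
  · intro x
    have := perB (x - q0)
    grind
  · intro x
    have := perC (q2 - 1 - x - (h1 + h2))
    grind
  · intro t ht ht'
    have := arc3C t ht (by omega)
    have := arc2A (q0 - 1 - t) (by omega) (by omega)
    grind
  · intro t ht ht'
    have := arc3A (h0 - 1 - t) (by omega) (by omega)
    have := perB (t + q1 - h0)
    have := arc2C (h2 - q0 + t) (by omega) (by omega)
    have := perA (-1 - h2 + q0 - t)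
    have := perC (t - q0 - h1)
    grind
  intro A' p lo hi
  constructor
  · intro t ht ht'
    by_cases hc : t < h1
    · have := hi (t + (h0 + h1 + h2 - 2 * q0)) (by omega) (by omega)
      have := arc3B (h1 - 1 - t) (by omega) (by omega)
      grind
    · have := p (t - h1)
      have := lo (t - h1) (by omega) (by omega)
      have := arc2A (t - h1 + q0) (by omega) (by omega)
      have := arc3A (t - h1) (by omega) (by omega)
      grind
  · intro t ht ht'
    by_cases hc : t < h2 - q0
    · have := hi (-1 - t + (h0 + h1 + h2 - 2 * q0)) (by omega) (by omega)
      have := arc3C (h2 - 1 - t) (by omega) (by omega)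
      have := arc2C (h2 - 1 - t - q0) (by omega) (by omega)
      have := perC (q2 - 1 - h1 - t)
      have := perC (-1 - t - q0 - h1)
      grind
    · have := lo (-1 - t + (h0 + h1 + h2 - 2 * q0)) (by omega) (by omega)
      have := perB (t - h0 - h1 - h2 + q0)
      have := arc2B (t - h2 + q0) (by omega) (by omega)
      have := perC (-1 - t - q0 - h1)
      grind

theorem sigmaGt (h : IsCol3 f A B C) (h1p : 0 < f.h1) (hq0 : f.h0 < f.q0) (hq2 : f.h2 < f.q0)
    (hq : f.q0 < f.h0 + f.h2) :
    IsCol3 (sigmaGt f)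
      (extend (sigmaGt f) (fun x => B (x - f.h0)) fun x => C (f.q0 - f.h0 + f.q2 - 1 - x))
      (fun x => B (x - f.h0)) (fun x => C (f.q0 - f.h0 + f.q2 - 1 - x)) := by
  obtain ⟨perA, perB, perC, arc2A, arc2B, arc2C, arc3A, arc3B, arc3C⟩ := h
  apply of_extend
  all_goals
    obtain ⟨h0, h1, h2, q0, q1, q2⟩ := f
    dsimp only [GMN.sigmaGt] at *
  · omega
  · omega
  · intro x
    have := perB (x - h0)
    grind
  · intro x
    have := perC (q0 - h0 + q2 - 1 - x - (h1 + h2))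
    grind
  · intro t ht ht'
    have := arc3C (q0 - h0 + t) (by omega) (by omega)
    have := arc2A (h0 - 1 - t) (by omega) (by omega)
    grind
  · intro t ht ht'
    have := arc2C t (by omega) (by omega)
    have := perA (-1 - t)
    have := arc3A (h0 + h2 - 1 - t - q0) (by omega) (by omega)
    grind
  intro A' p lo hi
  constructor
  · intro t ht ht'
    by_cases hc : t < q0 - h2
    · have := lo (t + h1) (by omega) (by omega)
      have := arc2A t (by omega) (by omega)
      have := perA t
      have := arc3A (t - q0 + h0 + h2) (by omega) (by omega)
      have := perB (-1 - t - h1 - h0)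
      have := perB (-1 - t + q0 - h0 - h2 + q1)
      grind
    · have := hi (t + h1) (by omega) (by omega)
      have := arc3B (h1 - 1 - (t - q0 + h2)) (by omega) (by omega)
      have := perB (-1 - t + q0 - h0 - h2 + q1)
      grind
  · intro t ht ht'
    by_cases hc : t < h1
    · have := lo (h1 - 1 - t) (by omega) (by omega)
      have := arc2B t (by omega) (by omega)
      have := perB (t - h1 - h0)
      grind
    · have := p (-1 - t + h1)
      have := hi (-1 - t + h1 + (q0 + h1 - h0 + (q0 + h1 - h2))) (by omega) (by omega)
      have := arc3C (q0 - h0 - 1 - t + h1) (by omega) (by omega)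
      have := arc2C (-1 - t + h1 + h2) (by omega) (by omega)
      have := perA (t - h1 - h2)
      have := perC (-1 - t)
      grind

theorem sigmaBetween (h : IsCol3 f A B C) (h1p : 0 < f.h1) (h2p : 0 < f.h2) (hq2 : f.h2 < f.q0)
    (hq0 : f.q0 < f.h0) :
    IsCol3 (sigmaBetween f)
      (extend (sigmaBetween f) (fun x => B (x - f.q0)) fun x => C (f.q2 - 1 - x))
      (fun x => B (x - f.q0)) (fun x => C (f.q2 - 1 - x)) := by
  obtain ⟨perA, perB, perC, arc2A, arc2B, arc2C, arc3A, arc3B, arc3C⟩ := h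
  apply of_extend
  all_goals
    obtain ⟨h0, h1, h2, q0, q1, q2⟩ := f
    dsimp only [GMN.sigmaBetween] at *
  · omega
  · omega
  · intro x
    have := perB (x - q0)
    grind
  · intro x
    have := perC (q2 - 1 - x - (h1 + h2))
    grind
  · intro t ht ht'
    have := arc3C t (by omega) (by omega)
    have := arc2A (q0 - 1 - t) (by omega) (by omega)
    grind
  · intro t ht ht'
    have := arc2C t (by omega) (by omega)
    have := perA (-1 - t)
    have := arc3A (h0 + h2 - 1 - t - q0) (by omega) (by omega)
    have := perB (t + q1 + q0 - h0 - h2)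
    grind
  intro A' p lo hi
  constructor
  · intro t ht ht'
    by_cases hc : t < q0 - h2
    · have := lo (t + h1 + h0 - q0) (by omega) (by omega)
      have := arc2A t (by omega) (by omega)
      have := perA t
      have := arc3A (t + h0 + h2 - q0) (by omega) (by omega)
      have := perB (-1 - t - h1 - h0)
      have := perB (-1 - t + q0 - h0 - h2 + q1)
      grind
    · by_cases hc' : t < q0 - h2 + h1
      · have := hi (t + h1 + h0 - q0) (by omega) (by omega)
        have := arc3B (h1 - 1 - (t - q0 + h2)) (by omega) (by omega)
        have := perB (-1 - t + q0 - h0 - h2 + q1)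
        grind
      · have := p (t - h1 - q0 + h2)
        have := lo (t - h1 - q0 + h2) (by omega) (by omega)
        have := arc2A (t - h1 + h2) (by omega) (by omega)
        have := arc3A (t - h1 + h2 - q0) (by omega) (by omega)
        have := perB (-1 - t + q0 - h0 - h2 + q1)
        grind
  · intro t ht ht'
    have := lo (h1 + h0 - q0 - 1 - t) (by omega) (by omega)
    have := arc2B t (by omega) (by omega)
    have := perB (t - h1 - h0)
    have := perC (-1 - t)
    grind

end IsCol3

/-- The orbit relation of the colours `2` and `3` on the vertices. -/
def orbitSetoid (f : Tuple) : Setoid (Vtx f) where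
  r a b := OrbRel f {2, 3} a b
  iseqv := ⟨fun _ => .refl _, .symm _ _, .trans _ _ _⟩

theorem threeOrbits_iff_card (f : Tuple) :
    ThreeOrbits f {2, 3} ↔ Nat.card (Quotient (orbitSetoid f)) = 3 := by
  have eq (a b : Vtx f) : (⟦a⟧ : Quotient (orbitSetoid f)) = ⟦b⟧ ↔ OrbRel f {2, 3} a b :=
    Quotient.eq
  rw [← Set.ncard_univ, Set.ncard_eq_three]
  constructor
  · rintro ⟨a, b, c, ha, hb, hc, hab, hac, hbc, h⟩
    refine ⟨⟦⟨a, ha⟩⟧, ⟦⟨b, hb⟩⟧, ⟦⟨c, hc⟩⟧, ?_, ?_, ?_, ?_⟩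
    · rwa [Ne, eq]
    · rwa [Ne, eq]
    · rwa [Ne, eq]
    · symm
      rw [Set.eq_univ_iff_forall]
      intro q
      induction q using Quotient.inductionOn with | h v =>
      simp only [Set.mem_insert_iff, Set.mem_singleton_iff, eq]
      exact (h v v.2).imp (.symm _ _) (Or.imp (.symm _ _) (.symm _ _))
  · rintro ⟨x, y, z, hxy, hxz, hyz, h⟩
    induction x using Quotient.inductionOn with | h a =>
    induction y using Quotient.inductionOn with | h b =>
    induction z using Quotient.inductionOn with | h c =>
    rw [Ne, eq] at hxy hxz hyz
    refine ⟨a, b, c, a.2, b.2, c.2, hxy, hxz, hyz, fun v hv => ?_⟩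
    have hv : (⟦⟨v, hv⟩⟧ : Quotient (orbitSetoid f)) ∈ Set.univ := trivial
    simp only [h, Set.mem_insert_iff, Set.mem_singleton_iff, eq] at hv
    exact hv.imp (.symm _ _) (Or.imp (.symm _ _) (.symm _ _))

theorem finite_vtx (f : Tuple) : (Vtx f).Finite := by
  have : Vtx f = ⋃ i : ZMod 3, (fun x => (i, x)) '' Set.Ico 0 (f.twol i) := by
    ext ⟨i, x⟩
    simp [Vtx]
  rw [this]
  exact Set.finite_iUnion fun i => (Set.finite_Ico _ _).image _

section

variable {f : Tuple} {c : ZMod 3 → ℤ → Bool}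

theorem emod_mem_vtx (hf : ∀ i, 0 < f.h i) (i : ZMod 3) (x : ℤ) : (i, x % f.twol i) ∈ Vtx f := by
  have : 0 < f.twol i := add_pos (hf _) (hf _)
  exact ⟨Int.emod_nonneg _ this.ne', Int.emod_lt_of_pos _ this⟩

theorem apply_iota2 (periodic : ∀ i x, c i (x + f.twol i) = c i x)
    (arc : ∀ i t, 0 ≤ t → t < f.h i → c i t = c (i + 1) (-1 - t)) {p : ZMod 3 × ℤ}
    (hp : p ∈ Vtx f) : c (iota2 f p).1 (iota2 f p).2 = c p.1 p.2 := by
  obtain ⟨h0, h1⟩ := hp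
  rw [iota2]
  split_ifs with h
  · dsimp only
    rw [apply_emod_of_periodic (periodic _), arc _ _ h0 h]
    congr 1
    ring
  · dsimp only
    have h2 : f.twol p.1 = f.h (p.1 - 1) + f.h p.1 := rfl
    rw [apply_emod_of_periodic (periodic _), arc _ _ (by omega) (by omega), sub_add_cancel,
      ← periodic]
    congr 1
    ring

theorem IsCol.apply_iota3 (hc : IsCol f c) (hf : ∀ i, 0 < f.h i) (p : ZMod 3 × ℤ) :
    c (iota3 f p).1 (iota3 f p).2 = c p.1 p.2 := by
  have h := apply_iota2 (f := f) (c := fun i x => c i (x + f.q i))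
    (fun i x => by rw [add_right_comm, hc.periodic]) hc.arc3
    (p := rhoInv f p) (emod_mem_vtx hf _ _)
  have h1 := apply_emod_of_periodic (A := fun x => c p.1 (x + f.q p.1))
    (fun x => by rw [add_right_comm, hc.periodic]) (p.2 - f.q p.1)
  simp only [sub_add_cancel] at h1
  simp only [iota3, Function.comp_apply, rho]
  rw [apply_emod_of_periodic (hc.periodic _), h]
  exact h1

theorem IsCol.apply_eq_of_orbRel (hc : IsCol f c) (hf : ∀ i, 0 < f.h i) {a b : ZMod 3 × ℤ}
    (h : OrbRel f {2, 3} a b) : c a.1 a.2 = c b.1 b.2 := by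
  induction h with
  | rel a b h =>
    obtain ⟨ha, hb, k, hk | hk, rfl⟩ := h
    · subst hk
      exact (apply_iota2 hc.periodic hc.arc2 ha).symm
    · cases hk
      exact (hc.apply_iota3 hf a).symm
  | refl a => rfl
  | symm a b _ ih => exact ih.symm
  | trans a b d _ _ ih ih' => exact ih.trans ih'

theorem IsCol.of_orbRel (hf : ∀ i, 0 < f.h i) (periodic : ∀ i x, c i (x + f.twol i) = c i x)
    (h : ∀ a ∈ Vtx f, ∀ b ∈ Vtx f, OrbRel f {2, 3} a b → c a.1 a.2 = c b.1 b.2) : IsCol f c where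
  periodic := periodic
  arc2 i t ht ht' := by
    have hm : t < f.twol i := by have := hf (i - 1); rw [Tuple.twol]; omega
    have hb := emod_mem_vtx hf (i + 1) (-t - 1)
    have := h (i, t) ⟨ht, hm⟩ _ hb (.rel _ _ ⟨⟨ht, hm⟩, hb, 2, by simp, by simp [iota, iota2, ht']⟩)
    dsimp only at this
    rw [this, apply_emod_of_periodic (periodic _)]
    congr 1
    ring
  arc3 i t ht ht' := by
    have hm : t < f.twol i := by have := hf (i - 1); rw [Tuple.twol]; omega
    have ha := emod_mem_vtx hf i (t + f.q i)
    have hb := emod_mem_vtx hf (i + 1) (-t - 1 + f.q (i + 1))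
    have := h _ ha _ hb (.rel _ _ ⟨ha, hb, 3, by simp, by
      simp [iota, iota3, rho, rhoInv, iota2, Int.emod_eq_of_lt ht hm, ht']⟩)
    dsimp only at this
    rw [apply_emod_of_periodic (periodic _), apply_emod_of_periodic (periodic _)] at this
    rw [this]
    congr 1
    ring

/-- Invariant two-valued functions are two-valued functions on the set of orbits. -/
def colEquiv (hf : ∀ i, 0 < f.h i) :
    (Quotient (orbitSetoid f) → Bool) ≃ {c // IsCol f c} where
  toFun u := ⟨fun i x => u ⟦⟨(i, x % f.twol i), emod_mem_vtx hf i x⟩⟧,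
    .of_orbRel hf (fun i x => by simp only [Int.add_emod_right]) fun a ha b hb h => by
      congr 1
      refine Quotient.sound (show OrbRel f {2, 3} _ _ from ?_)
      simpa only [Int.emod_eq_of_lt ha.1 ha.2, Int.emod_eq_of_lt hb.1 hb.2] using h⟩
  invFun c := Quotient.lift (fun v => c.1 v.1.1 v.1.2) fun _ _ h => c.2.apply_eq_of_orbRel hf h
  left_inv u := by
    funext q
    induction q using Quotient.inductionOn with | h v =>
    simp only [Quotient.lift_mk, Int.emod_eq_of_lt v.2.1 v.2.2]
  right_inv c := by
    ext i x
    exact apply_emod_of_periodic (c.2.periodic i) x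

theorem threeOrbits_iff (hf : ∀ i, 0 < f.h i) :
    ThreeOrbits f {2, 3} ↔ Nat.card {c // IsCol f c} = 8 := by
  have := (finite_vtx f).to_subtype
  rw [threeOrbits_iff_card, ← Nat.card_congr (colEquiv hf), Nat.card_fun,
    Nat.card_eq_fintype_card (α := Bool), Fintype.card_bool, show 8 = 2 ^ 3 from rfl,
    Nat.pow_right_inj one_lt_two]

end

theorem nonempty_embedding {f g : Tuple} (h0 : 0 < f.h0) (h2 : 0 < f.h2)
    {b c : (ℤ → Bool) → ℤ → Bool} (hb : b.Injective) (hc : c.Injective)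
    (h : ∀ A B C, IsCol3 f A B C → ∃ A', IsCol3 g A' (b B) (c C)) :
    Nonempty ({c // IsCol f c} ↪ {c // IsCol g c}) := by
  have n1 : (1 : ZMod 3) ≠ 0 := by decide
  have n2 : (2 : ZMod 3) ≠ 0 := by decide
  have n3 : (2 : ZMod 3) ≠ 1 := by decide
  choose! a ha using h
  refine ⟨⟨fun d => ⟨fun i => if i = 0 then a (d.1 0) (d.1 1) (d.1 2) else
    if i = 1 then b (d.1 1) else c (d.1 2), ?_⟩, ?_⟩⟩
  · simpa only [isCol_iff, if_true, n1, n2, n3, if_false] using ha _ _ _ (isCol_iff.1 d.2)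
  · intro d e hde
    have hde := congrArg Subtype.val hde
    have e1 := congrFun hde 1
    have e2 := congrFun hde 2
    simp only [if_true, n1, n2, n3, if_false] at e1 e2
    have e1 := hb e1
    have e2 := hc e2
    have e0 : d.1 0 = e.1 0 := by
      rw [(isCol_iff.1 d.2).eq_extend h0 h2, (isCol_iff.1 e.2).eq_extend h0 h2, e1, e2]
    exact Subtype.ext (funext (forall_zmod_three.2 ⟨e0, e1, e2⟩))

theorem IsCol3.reduce {f : Tuple} {A B C : ℤ → Bool} (h : IsCol3 f A B C) :
    IsCol3 ⟨f.h0, f.h1, f.h2, f.q0 % (f.h2 + f.h0), f.q1 % (f.h0 + f.h1), f.q2 % (f.h1 + f.h2)⟩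
      A B C := by
  obtain ⟨k0, e0⟩ := emod_eq_sub f.q0 (f.h2 + f.h0)
  obtain ⟨k1, e1⟩ := emod_eq_sub f.q1 (f.h0 + f.h1)
  obtain ⟨k2, e2⟩ := emod_eq_sub f.q2 (f.h1 + f.h2)
  rw [e0, e1, e2]
  constructor
  case arc3A | arc3B | arc3C =>
    simp only [← add_assoc, apply_add_mul_of_periodic h.perA, apply_add_mul_of_periodic h.perB,
      apply_add_mul_of_periodic h.perC]
    first | exact h.arc3A | exact h.arc3B | exact h.arc3C
  exacts [h.perA, h.perB, h.perC, h.arc2A, h.arc2B, h.arc2C]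

theorem Good.nonempty_embedding_sigma {f : Tuple} (hf : Good f)
    (hq : ¬ (f.h0 < f.q0 ∧ f.q0 < f.h2)) :
    Nonempty ({c // IsCol f c} ↪ {c // IsCol (GMN.sigma f) c}) := by
  have sub (a : ℤ) : Function.Injective fun (B : ℤ → Bool) x => B (x - a) :=
    (Equiv.subRight a).surjective.injective_comp_right
  have sub' (a : ℤ) : Function.Injective fun (B : ℤ → Bool) x => B (a - x) :=
    (Equiv.subLeft a).surjective.injective_comp_right
  rcases hf.sigma_cases with h | ⟨h, h0, h2⟩ | ⟨h0, h2⟩ | h | ⟨h2, h0⟩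
  · rw [sigma_of_eq_zero h]
    exact ⟨.refl _⟩
  · refine nonempty_embedding hf.h0_pos hf.h2_pos (sub f.q0) (sub' (f.q2 - 1)) fun A B C hc => ?_
    rw [sigma_of_lt h h0 h2]
    exact ⟨_, (hc.sigmaLt hf.h1_pos h h0 h2).reduce⟩
  · refine nonempty_embedding hf.h0_pos hf.h2_pos (sub f.h0) (sub' (f.q0 - f.h0 + f.q2 - 1))
      fun A B C hc => ?_
    rw [sigma_of_gt hf h0 h2]
    exact ⟨_, (hc.sigmaGt hf.h1_pos h0 h2 (by have := hf.q0_lt; omega)).reduce⟩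
  · exact absurd h hq
  · refine nonempty_embedding hf.h0_pos hf.h2_pos (sub f.q0) (sub' (f.q2 - 1)) fun A B C hc => ?_
    rw [sigma_of_between' hf h2 h0]
    exact ⟨_, (hc.sigmaBetween hf.h1_pos hf.h2_pos h2 h0).reduce⟩

theorem Good.sigma_not_between {f : Tuple} (hf : Good f) (hq : ¬ (f.h0 < f.q0 ∧ f.q0 < f.h2)) :
    ¬ ((GMN.sigma f).h0 < (GMN.sigma f).q0 ∧ (GMN.sigma f).q0 < (GMN.sigma f).h2) := by
  have := hf.h0_pos
  have := hf.h1_pos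
  have := hf.h2_pos
  rcases hf.sigma_cases with h | ⟨h, h0, h2⟩ | ⟨h0, h2⟩ | h | ⟨h2, h0⟩
  · rwa [sigma_of_eq_zero h]
  · rw [sigma_of_lt h h0 h2]
    dsimp only
    rw [Int.emod_eq_of_lt (by omega) (by omega)]
    omega
  · rw [sigma_of_gt hf h0 h2]
    dsimp only
    rw [Int.emod_eq_of_lt (by omega) (by omega)]
    omega
  · exact absurd h hq
  · rw [sigma_of_between' hf h2 h0]
    dsimp only
    rw [Int.emod_eq_of_lt (by omega) (by omega)]
    omega

theorem Good.h_pos {f : Tuple} (hf : Good f) : ∀ i, 0 < f.h i :=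
  ((good_iff f).1 hf).1.1

theorem Good.admissible_iff {f : Tuple} (hf : Good f) :
    Admissible f ↔ Nat.card {c // IsCol f c} = 8 := by
  have := (good_iff f).1 hf
  rw [Admissible, threeOrbits_iff hf.h_pos, and_iff_right this.1, and_iff_right this.2]

theorem Admissible.sigma {f : Tuple} (hf : Admissible f) (hq : ¬ (f.h0 < f.q0 ∧ f.q0 < f.h2)) :
    Admissible (sigma f) := by
  have hg := hf.good
  obtain ⟨e⟩ := hg.nonempty_embedding_sigma hq
  obtain ⟨e'⟩ := hg.sigma.nonempty_embedding_sigma (hg.sigma_not_between hq)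
  rw [sigma_sigma hg] at e'
  obtain ⟨e⟩ := e.antisymm e'
  rw [hg.sigma.admissible_iff, ← Nat.card_congr e]
  exact hg.admissible_iff.1 hf

theorem Admissible.psi1 {f : Tuple} (hf : Admissible f) : Admissible (psi1 f) := by
  rw [hf.good.psi1.admissible_iff, ← hf.good.admissible_iff.1 hf]
  refine (Nat.card_congr (Equiv.subtypeEquiv
    ((Equiv.subRight (1 : ZMod 3)).arrowCongr (.refl _)) fun c => ?_)).symm
  have e3 : (1 : ZMod 3) + 1 = 2 := by decide
  have e4 : (2 : ZMod 3) + 1 = 0 := by decide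
  simp only [isCol_iff, Equiv.arrowCongr_apply, Equiv.coe_refl, Function.comp_apply, id_eq,
    Equiv.subRight_symm_apply, zero_add, e3, e4]
  exact ⟨fun ⟨a1, a2, a3, b1, b2, b3, c1, c2, c3⟩ => ⟨a2, a3, a1, b2, b3, b1, c2, c3, c1⟩,
    fun ⟨a1, a2, a3, b1, b2, b3, c1, c2, c3⟩ => ⟨a3, a1, a2, b3, b1, b2, c3, c1, c2⟩⟩

/-- For `h₀ ≤ h₁ ≤ h₂`, the complexity is minimal in the `G`-orbit iff the conjugate of `σ` fixing
the index `2` does not decrease it. -/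
theorem Admissible.forall_nu_le_iff {f : Tuple} (hf : Admissible f) (h01 : f.h0 ≤ f.h1)
    (h12 : f.h1 ≤ f.h2) :
    (∀ g, GEquiv f g → nu f ≤ nu g) ↔ nu f ≤ nu (GMN.sigma (GMN.psi1 (GMN.psi1 f))) := by
  have hg := hf.good
  constructor
  · intro h
    have s1 : GEquiv f (GMN.psi1 f) := .rel _ _ ⟨hf, hf.psi1, .inl rfl⟩
    have s2 : GEquiv f (GMN.psi1 (GMN.psi1 f)) :=
      .trans _ _ _ s1 (.rel _ _ ⟨hf.psi1, hf.psi1.psi1, .inl rfl⟩)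
    refine h _ (.trans _ _ _ s2 (.rel _ _ ⟨hf.psi1.psi1, ?_, .inr (.inr (.inr rfl))⟩))
    exact hf.psi1.psi1.sigma fun ⟨a, b⟩ => by dsimp only [GMN.psi1] at a b; omega
  · intro h g
    refine hg.nu_le_of_gEquiv ?_
    rintro g (rfl | rfl | rfl)
    · refine hg.nu_sigma_le_iff.2 ?_
      obtain ⟨⟩ := hg
      omega
    · rw [nu_psi1, nu_psi1, ← nu_psi1 f]
      refine hg.psi1.nu_sigma_le_iff.2 ?_
      obtain ⟨⟩ := hg
      dsimp only [GMN.psi1]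
      omega
    · rwa [nu_psi1]

/-- a canonical 6-tuple `(h₀,h₁,h₂;q₀,q₁,q₂)` is minimal iff
`q₂ < h₀`, or `q₂ > h₁+h₂−h₀`, or `h₀ = h₁` and `h₀ < q₂ < h₂`. -/
theorem stmt_18 (f : Tuple) (hf : Canonical f) :
    Minimal f ↔
      (f.q2 < f.h0 ∨ f.h1 + f.h2 - f.h0 < f.q2 ∨
        (f.h0 = f.h1 ∧ f.h0 < f.q2 ∧ f.q2 < f.h2)) := by
  have hg := hf.1.good
  obtain ⟨h01, h12⟩ := hf.2.1
  rw [Minimal, and_iff_right hf, hf.1.forall_nu_le_iff h01 h12, ← nu_psi1, ← nu_psi1 (psi1 f),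
    hg.psi1.psi1.nu_sigma_le_iff]
  obtain ⟨⟩ := hg
  dsimp only [psi1]
  omega

end GMN
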